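/- For every Q ∈ 𝒬, the determinant of the Cayley–Menger matrix of the variogram Γ(Q) is the reciprocal of the spanning tree polynomial: det(CM(Γ(Q))) · τ(Q) = 1. In particular det(CM(Γ(Q))) > 0 and (1/2) log det(CM(Γ(Q))) = −(1/2) log τ(Q). -/

import Mathlib

open Matrix Finset

/-- `Θ(Q)`: `Θ(Q)_{ij} = −Q_{ij}` for `i ≠ j` and `Θ(Q)_{ii} = ∑_{j≠i} Q_{ij}`. -/
noncomputable def thetaOf {d : ℕ} (Q : Matrix (Fin d) (Fin d) ℝ) :
    Matrix (Fin d) (Fin d) ℝ :=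
  Matrix.of fun i j => if i = j then ∑ l ∈ univ.filter (fun l => l ≠ i), Q i l else -Q i j

/-- Membership in `𝒬`: symmetric, zero diagonal, and `xᵀΘ(Q)x > 0` for every nonzero
`x` with `∑ᵢ xᵢ = 0`. -/
def memQ {d : ℕ} (Q : Matrix (Fin d) (Fin d) ℝ) : Prop :=
  Q.IsSymm ∧ (∀ i, Q i i = 0) ∧
    ∀ x : Fin d → ℝ, x ≠ 0 → (∑ i, x i) = 0 → 0 < x ⬝ᵥ (thetaOf Q).mulVec x

/-- The centering matrix `P = I − (1/d)𝟙𝟙ᵀ`. -/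
noncomputable def Pmat (d : ℕ) : Matrix (Fin d) (Fin d) ℝ :=
  1 - ((d : ℝ)⁻¹) • Matrix.of (fun _ _ : Fin d => (1 : ℝ))

/-- `S` is the matrix `Σ(Q)`: the unique symmetric matrix with `Σ(Q)𝟙 = 0` and
`Θ(Q)Σ(Q) = P`. -/
def isSigmaOf {d : ℕ} (Q S : Matrix (Fin d) (Fin d) ℝ) : Prop :=
  S.IsSymm ∧ S.mulVec (fun _ => 1) = 0 ∧ thetaOf Q * S = Pmat d

/-- The variogram associated with `Σ`: `Γ_{ij} = Σ_{ii} + Σ_{jj} − 2Σ_{ij}`. -/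
noncomputable def gammaOf {d : ℕ} (S : Matrix (Fin d) (Fin d) ℝ) :
    Matrix (Fin d) (Fin d) ℝ :=
  Matrix.of fun i j => S i i + S j j - 2 * S i j

/-- The inner product `⟨A, B⟩ = ∑_{i<j} A_{ij} B_{ij}` on symmetric matrices with
zero diagonal. -/
noncomputable def sinner {d : ℕ} (A B : Matrix (Fin d) (Fin d) ℝ) : ℝ :=
  ∑ p ∈ univ.filter (fun p : Fin d × Fin d => p.1 < p.2), A p.1 p.2 * B p.1 p.2

open Classical in
/-- The spanning tree polynomial `τ(Q) = ∑_T ∏_{{i,j}∈T} Q_{ij}`, summed over all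
spanning trees of the complete graph on `{1, …, d}`. -/
noncomputable def tau {d : ℕ} (Q : Matrix (Fin d) (Fin d) ℝ) : ℝ :=
  ∑ T ∈ (univ : Finset (SimpleGraph (Fin d))).filter (fun T => T.IsTree),
    ∏ p ∈ univ.filter (fun p : Fin d × Fin d => p.1 < p.2 ∧ T.Adj p.1 p.2), Q p.1 p.2

/-- The Cayley–Menger matrix of `Γ`. -/
noncomputable def CM {d : ℕ} (Γ : Matrix (Fin d) (Fin d) ℝ) :
    Matrix (Fin (d + 1)) (Fin (d + 1)) ℝ :=
  Matrix.of fun a b =>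
    if ha : (a : ℕ) < d then
      (if hb : (b : ℕ) < d then -Γ ⟨a, ha⟩ ⟨b, hb⟩ / 2 else 1)
    else (if (b : ℕ) < d then -1 else 0)

/-- Membership in the cone `𝒞^d` of symmetric matrices with zero diagonal that are
strictly conditionally negative definite. -/
def memC {d : ℕ} (Γ : Matrix (Fin d) (Fin d) ℝ) : Prop :=
  Γ.IsSymm ∧ (∀ i, Γ i i = 0) ∧
    ∀ x : Fin d → ℝ, x ≠ 0 → (∑ i, x i) = 0 → x ⬝ᵥ Γ.mulVec x < 0

/-! The matrix-tree theorem comes from expanding the determinant of the Laplacian, grounded at a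
root, multilinearly in its rows: choosing a term in each row picks an arc out of every other
vertex, and the resulting determinant is `1` when following the arcs always leads to the root and
`0` otherwise. Choices of the first kind are the spanning trees, oriented towards the root.

Adding multiples of the border to the other rows and columns of the Cayley–Menger matrix of `Γ(Q)`
replaces `-Γ(Q) / 2` by `Σ(Q)`. Since `Θ(Q)` kills `𝟙` and `Θ(Q)Σ(Q)` differs from the identity by
a rank-one matrix, multiplying by a bordered `Θ(Q)` of determinant `τ(Q)` gives determinant `1`.
Finally `τ(Q)`, being the determinant of a positive semidefinite matrix, is nonnegative. -/

section ParentMap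

variable {V : Type*} {r : V} {f g : V → V}

/-- `f` is the parent map of a tree on `V` rooted at `r`: it fixes `r`, and iterating it from any
vertex leads to `r`. -/
structure IsParentMap (r : V) (f : V → V) : Prop where
  map_root : f r = r
  exists_iterate_eq_root : ∀ v, ∃ k, f^[k] v = r

theorem isParentMap_iff_exists_depth :
    IsParentMap r f ↔ f r = r ∧ ∃ depth : V → ℕ, ∀ v ≠ r, depth (f v) < depth v := by
  classical
  constructor
  · rintro ⟨hr, hreach⟩
    refine ⟨hr, fun v => Nat.find (hreach v), fun v hv => ?_⟩
    change Nat.find (hreach (f v)) < Nat.find (hreach v)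
    have hpos : Nat.find (hreach v) ≠ 0 := fun h0 => hv ((Nat.find_eq_zero _).mp h0)
    obtain ⟨k, hk⟩ := Nat.exists_eq_succ_of_ne_zero hpos
    have hroot : f^[k] (f v) = r := by
      rw [← Function.iterate_succ_apply, ← hk]
      exact Nat.find_spec (hreach v)
    exact hk ▸ Nat.lt_succ_of_le (Nat.find_min' _ hroot)
  · rintro ⟨hr, depth, hdepth⟩
    refine ⟨hr, fun v => ?_⟩
    induction hn : depth v using Nat.strong_induction_on generalizing v with
    | _ n ih =>
      by_cases hv : v = r
      · exact ⟨0, hv⟩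
      · obtain ⟨k, hk⟩ := ih _ (hn ▸ hdepth v hv) (f v) rfl
        exact ⟨k + 1, hk⟩

namespace IsParentMap

theorem induction {p : V → Prop} (hf : IsParentMap r f) (root : p r)
    (step : ∀ v ≠ r, p (f v) → p v) (v : V) : p v := by
  obtain ⟨k, hk⟩ := hf.exists_iterate_eq_root v
  induction k generalizing v with
  | zero => exact (show v = r from hk) ▸ root
  | succ k ih =>
    by_cases hv : v = r
    · exact hv ▸ root
    · exact step v hv (ih (f v) hk)

theorem map_map_ne (hf : IsParentMap r f) {v : V} (hv : v ≠ r) : f (f v) ≠ v := by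
  obtain ⟨hr, depth, hdepth⟩ := isParentMap_iff_exists_depth.mp hf
  intro hcycle
  have hfv : f v ≠ r := fun h => hv (by rw [← hcycle, h, hr])
  have hlt := hdepth (f v) hfv
  rw [hcycle] at hlt
  exact lt_asymm (hdepth v hv) hlt

theorem map_ne (hf : IsParentMap r f) {v : V} (hv : v ≠ r) : f v ≠ v :=
  fun h => hf.map_map_ne hv (by rw [h, h])

theorem injOn_edge (hf : IsParentMap r f) : Set.InjOn (fun v => s(v, f v)) {r}ᶜ := by
  intro v hv w _ h
  rcases Sym2.eq_iff.mp h with ⟨hvw, _⟩ | ⟨hvw, hwv⟩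
  · exact hvw
  · exact absurd (hwv ▸ hvw.symm) (hf.map_map_ne hv)

end IsParentMap

/-- The undirected graph underlying a parent map, joining each vertex to its parent. -/
def parentGraph (f : V → V) : SimpleGraph V :=
  SimpleGraph.fromRel fun v w => f v = w

namespace IsParentMap

theorem adj_map (hf : IsParentMap r f) {v : V} (hv : v ≠ r) : (parentGraph f).Adj v (f v) :=
  ⟨(hf.map_ne hv).symm, Or.inl rfl⟩

theorem edgeSet_parentGraph (hf : IsParentMap r f) :
    (parentGraph f).edgeSet = (fun v => s(v, f v)) '' {r}ᶜ := by
  have ne_root {v : V} (h : v ≠ f v) : v ≠ r := fun hv => h (by rw [hv, hf.map_root])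
  ext e
  induction e using Sym2.ind with
  | _ v w =>
    constructor
    · rintro ⟨hne : v ≠ w, (rfl : f v = w) | (rfl : f w = v)⟩
      · exact ⟨v, ne_root hne, rfl⟩
      · exact ⟨w, ne_root hne.symm, Sym2.eq_swap⟩
    · rintro ⟨u, hu, h⟩
      exact h ▸ hf.adj_map hu

theorem connected_parentGraph (hf : IsParentMap r f) : (parentGraph f).Connected := by
  have reachable_root : ∀ v, (parentGraph f).Reachable v r :=
    hf.induction .rfl fun v hv h => (hf.adj_map hv).reachable.trans h
  exact (SimpleGraph.connected_iff_exists_forall_reachable _).mpr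
    ⟨r, fun v => (reachable_root v).symm⟩

theorem isTree_parentGraph [Finite V] (hf : IsParentMap r f) : (parentGraph f).IsTree := by
  refine SimpleGraph.isTree_iff_connected_and_card.mpr ⟨hf.connected_parentGraph, ?_⟩
  have hcard : ({r}ᶜ : Set V).ncard + 1 = Nat.card V := by
    rw [← Set.ncard_singleton r, add_comm, Set.ncard_add_ncard_compl]
  rw [Nat.card_coe_set_eq, hf.edgeSet_parentGraph, hf.injOn_edge.ncard_image, hcard]

theorem parentGraph_injective (hf : IsParentMap r f) (hg : IsParentMap r g)
    (h : parentGraph f = parentGraph g) : f = g := by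
  refine funext (hf.induction ?_ fun v hv ih => ?_)
  · rw [hf.map_root, hg.map_root]
  · have hadj : (parentGraph g).Adj v (f v) := h ▸ hf.adj_map hv
    rcases hadj.2 with hgv | hgfv
    · exact hgv.symm
    · exact absurd (ih.trans hgfv) (hf.map_map_ne hv)

end IsParentMap

theorem exists_adj_dist_lt {G : SimpleGraph V} (hG : G.Connected) {v r : V} (hv : v ≠ r) :
    ∃ w, G.Adj v w ∧ G.dist w r < G.dist v r := by
  obtain ⟨p, hp⟩ := hG.exists_walk_length_eq_dist v r
  cases p with
  | nil => exact absurd rfl hv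
  | cons hadj q =>
    rw [SimpleGraph.Walk.length_cons] at hp
    exact ⟨_, hadj, hp ▸ Nat.lt_succ_of_le (SimpleGraph.dist_le q)⟩

theorem exists_isParentMap_parentGraph_eq (r : V) {T : SimpleGraph V} (hT : T.IsTree) :
    ∃ f, IsParentMap r f ∧ parentGraph f = T := by
  classical
  choose! next hadj hdist using
    fun v (hv : v ≠ r) => exists_adj_dist_lt hT.connected hv
  let f : V → V := Function.update next r r
  have hroot : f r = r := Function.update_self ..
  have hne {v : V} (hv : v ≠ r) : f v = next v := Function.update_of_ne hv ..
  have hf : IsParentMap r f := isParentMap_iff_exists_depth.mpr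
    ⟨hroot, (T.dist · r), fun v hv => by rw [hne hv]; exact hdist v hv⟩
  have hle : parentGraph f ≤ T := by
    rw [← SimpleGraph.edgeSet_subset_edgeSet, hf.edgeSet_parentGraph]
    rintro _ ⟨v, hv, rfl⟩
    rw [SimpleGraph.mem_edgeSet, hne hv]
    exact hadj v hv
  exact ⟨f, hf, (SimpleGraph.isTree_iff_minimal_connected.mp hT).eq_of_le
    hf.connected_parentGraph hle⟩

end ParentMap

section EdgeProduct

variable {V M : Type*} [Fintype V] [CommMonoid M]

theorem IsParentMap.prod_edgeFinset [DecidableEq V] {r : V} {f : V → V} (hf : IsParentMap r f)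
    [Fintype (parentGraph f).edgeSet] (w : Sym2 V → M) :
    ∏ e ∈ (parentGraph f).edgeFinset, w e = ∏ v ∈ univ.erase r, w s(v, f v) := by
  have hedges : (parentGraph f).edgeFinset = (univ.erase r).image fun v => s(v, f v) := by
    rw [← Finset.coe_inj, SimpleGraph.coe_edgeFinset, hf.edgeSet_parentGraph]
    simp [Set.compl_eq_univ_sdiff]
  rw [hedges, prod_image]
  exact hf.injOn_edge.mono fun v hv => (mem_erase.mp hv).1

theorem prod_edgeFinset_eq_prod_filter_lt [LinearOrder V] (T : SimpleGraph V)
    [DecidableRel T.Adj] (w : Sym2 V → M) :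
    ∏ e ∈ T.edgeFinset, w e = ∏ p : V × V with p.1 < p.2 ∧ T.Adj p.1 p.2, w s(p.1, p.2) := by
  symm
  refine prod_nbij (fun p => s(p.1, p.2)) ?_ ?_ ?_ fun _ _ => rfl
  · simp
  · rintro ⟨a, b⟩ hab ⟨a', b'⟩ hab' h
    grind
  · intro e
    induction e using Sym2.ind with
    | _ a b =>
      intro he
      have hab : T.Adj a b := by simpa using he
      rcases hab.ne.lt_or_gt with hlt | hgt
      · exact ⟨(a, b), by simp [hlt, hab], rfl⟩
      · exact ⟨(b, a), by simp [hgt, hab.symm], Sym2.eq_swap⟩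

end EdgeProduct

section SpanningTreeSum

variable {V R : Type*} [Fintype V] [CommSemiring R]

open Classical in
/-- The spanning tree polynomial of the complete graph on `V`. Edge weights are a function on
unordered pairs, which builds in their symmetry. -/
noncomputable def spanningTreeSum (w : Sym2 V → R) : R :=
  ∑ T : SimpleGraph V with T.IsTree, ∏ e ∈ T.edgeFinset, w e

open Classical in
theorem spanningTreeSum_eq_sum_isParentMap (r : V) (w : Sym2 V → R) :
    spanningTreeSum w =
      ∑ f : V → V with IsParentMap r f, ∏ v ∈ univ.erase r, w s(v, f v) := by
  rw [spanningTreeSum, eq_comm]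
  refine sum_bij (fun f _ => parentGraph f) ?_ ?_ ?_ ?_
  · intro f hf
    exact mem_filter.mpr ⟨mem_univ _, (mem_filter.mp hf).2.isTree_parentGraph⟩
  · intro f hf g hg
    exact (mem_filter.mp hf).2.parentGraph_injective (mem_filter.mp hg).2
  · intro T hT
    obtain ⟨f, hf, hfT⟩ := exists_isParentMap_parentGraph_eq r (mem_filter.mp hT).2
    exact ⟨f, mem_filter.mpr ⟨mem_univ _, hf⟩, hfT⟩
  · intro f hf
    exact ((mem_filter.mp hf).2.prod_edgeFinset w).symm

end SpanningTreeSum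

section MatrixTree

variable {V R : Type*} [Fintype V] [DecidableEq V] [CommRing R]

theorem det_eq_zero_of_mulVec_eq_zero_of_eq_one {M : Matrix V V R} {x : V → R} (hM : M *ᵥ x = 0)
    {v : V} (hv : x v = 1) : M.det = 0 :=
  Matrix.det_eq_zero_of_mulVec_eq_zero_of_mem_nonZeroDivisors hM (hv ▸ one_mem (nonZeroDivisors R))

theorem det_of_sum_smul {κ : Type*} [Fintype κ] (c : Matrix V κ R) (x : V → κ → V → R) :
    (of fun v => ∑ k, c v k • x v k).det =
      ∑ f : V → κ, (∏ v, c v (f v)) * (of fun v => x v (f v)).det := by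
  classical
  calc (of fun v => ∑ k, c v k • x v k).det
      = ∑ f : V → κ, (of fun v => c v (f v) • x v (f v)).det :=
        detRowAlternating.toMultilinearMap.map_sum fun v k => c v k • x v k
    _ = ∑ f : V → κ, (∏ v, c v (f v)) * (of fun v => x v (f v)).det :=
        sum_congr rfl fun f _ => det_mul_column (fun v => c v (f v)) (of fun v => x v (f v))

/-- The Laplacian of the weighted directed graph with weight `W v w` on the arc from `v` to `w`;
the diagonal of `W` cancels out. -/
def weightedLaplacian (W : Matrix V V R) : Matrix V V R :=
  diagonal (W *ᵥ 1) - W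

theorem weightedLaplacian_mulVec_one (W : Matrix V V R) : weightedLaplacian W *ᵥ 1 = 0 := by
  ext v
  simp [weightedLaplacian, sub_mulVec, mulVec_diagonal]

theorem weightedLaplacian_row (W : Matrix V V R) (v : V) :
    weightedLaplacian W v = ∑ w, W v w • (Pi.single v 1 - Pi.single w 1) := by
  ext u
  simp [weightedLaplacian, mulVec, dotProduct, diagonal_apply, Pi.single_apply, mul_sub,
    sum_sub_distrib, eq_comm]

/-- The row indexed by `v` of the Laplacian of a single arc from `v` to `w`, grounded at `r`: the
row of `r` is replaced by the basis vector of `r`. -/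
def groundedRow (r v w : V) : V → R :=
  if v = r then Pi.single r 1 else Pi.single v 1 - Pi.single w 1

theorem IsParentMap.det_groundedRow {r : V} {f : V → V} (hf : IsParentMap r f) :
    (of fun v => groundedRow (R := R) r v (f v)).det = 1 := by
  obtain ⟨-, depth, hdepth⟩ := isParentMap_iff_exists_depth.mp hf
  set N : Matrix V V R := of fun v => groundedRow r v (f v) with hN
  have hentry : ∀ v w, depth v ≤ depth w → N v w = (1 : Matrix V V R) v w := by
    intro v w hvw
    by_cases hv : v = r
    · simp [hN, groundedRow, hv, one_apply, Pi.single_apply, eq_comm]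
    · have hw : w ≠ f v := by
        rintro rfl
        exact (hdepth v hv).not_ge hvw
      simp [hN, groundedRow, hv, one_apply, Pi.single_apply, hw, @eq_comm _ w]
  have htri : Nᵀ.BlockTriangular depth := by
    intro v w hvw
    rw [transpose_apply, hentry w v hvw.le, one_apply_ne]
    rintro rfl
    exact hvw.false
  rw [← det_transpose, htri.det]
  refine prod_eq_one fun n _ => ?_
  have hblock : Nᵀ.toSquareBlock depth n = 1 := by
    ext v w
    rw [toSquareBlock_def, of_apply, transpose_apply, hentry _ _ (by rw [v.2, w.2])]
    simp [one_apply, Subtype.ext_iff, eq_comm]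
  rw [hblock, det_one]

theorem det_groundedRow_eq_zero {r : V} {f : V → V} (hr : f r = r) (hf : ¬IsParentMap r f) :
    (of fun v => groundedRow (R := R) r v (f v)).det = 0 := by
  classical
  obtain ⟨v₀, hv₀⟩ : ∃ v, ¬∃ k, f^[k] v = r := by
    contrapose! hf
    exact ⟨hr, hf⟩
  -- The indicator of the vertices that never reach the root is a kernel vector.
  let x : V → R := fun v => if ∃ k, f^[k] v = r then 0 else 1
  have hxr : x r = 0 := if_pos ⟨0, rfl⟩
  have hxf : ∀ v ≠ r, x (f v) = x v := by
    intro v hv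
    refine if_congr ⟨fun ⟨k, hk⟩ => ⟨k + 1, hk⟩, ?_⟩ rfl rfl
    rintro ⟨_ | k, hk⟩
    · exact absurd hk hv
    · exact ⟨k, hk⟩
  refine det_eq_zero_of_mulVec_eq_zero_of_eq_one (x := x) (funext fun v => ?_) (if_neg hv₀)
  change groundedRow r v (f v) ⬝ᵥ x = 0
  by_cases hv : v = r
  · simp [groundedRow, hv, hxr]
  · simp [groundedRow, hv, sub_dotProduct, hxf v hv]

open Classical in
theorem det_weightedLaplacian_updateRow (W : Matrix V V R) (r : V) :
    ((weightedLaplacian W).updateRow r (Pi.single r 1)).det =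
      ∑ f : V → V with IsParentMap r f, ∏ v ∈ univ.erase r, W v (f v) := by
  have hrows : (weightedLaplacian W).updateRow r (Pi.single r 1) =
      of fun v => ∑ w, W.updateRow r (Pi.single r 1) v w • groundedRow r v w := by
    ext v : 1
    by_cases hv : v = r
    · subst hv
      simp [groundedRow, Pi.single_apply, ← sum_smul]
    · simp [groundedRow, hv, weightedLaplacian_row, updateRow_ne]
  have hprod (f : V → V) : ∏ v, W.updateRow r (Pi.single r 1) v (f v) =
      if f r = r then ∏ v ∈ univ.erase r, W v (f v) else 0 := by
    rw [← mul_prod_erase univ _ (mem_univ r), updateRow_self, Pi.single_apply, ite_mul, one_mul,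
      zero_mul]
    congr 1
    exact prod_congr rfl fun v hv => by rw [updateRow_ne (ne_of_mem_erase hv)]
  rw [hrows, det_of_sum_smul, sum_filter]
  refine sum_congr rfl fun f _ => ?_
  rw [hprod]
  by_cases hf : IsParentMap r f
  · rw [if_pos hf.map_root, if_pos hf, hf.det_groundedRow, mul_one]
  · rw [if_neg hf]
    split_ifs with hr
    · rw [det_groundedRow_eq_zero hr hf, mul_zero]
    · rw [zero_mul]

theorem det_add_single {M : Matrix V V R} (hM : M *ᵥ 1 = 0) (r : V) :
    (M + single r r 1).det = (M.updateRow r (Pi.single r 1)).det := by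
  have hadd : M + single r r 1 = M.updateRow r (M r + Pi.single r 1) := by
    ext v w
    by_cases hv : v = r
    · subst hv
      simp [single_apply, Pi.single_apply, eq_comm]
    · simp [hv, Ne.symm hv]
  rw [hadd, det_updateRow_add, updateRow_eq_self,
    det_eq_zero_of_mulVec_eq_zero_of_eq_one hM (v := r) rfl, zero_add]

theorem det_weightedLaplacian_add_single (w : Sym2 V → R) (r : V) :
    (weightedLaplacian (of fun u v => w s(u, v)) + single r r 1).det = spanningTreeSum w := by
  classical
  rw [det_add_single (weightedLaplacian_mulVec_one _), det_weightedLaplacian_updateRow]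
  simp only [of_apply]
  convert (spanningTreeSum_eq_sum_isParentMap r w).symm

end MatrixTree

theorem replicateCol_mul_replicateRow {m n R : Type*} [NonUnitalNonAssocSemiring R]
    (x : m → R) (y : n → R) :
    (replicateCol (Fin 1) x * replicateRow (Fin 1) y : Matrix m n R) = vecMulVec x y := by
  ext i j
  simp [mul_apply, vecMulVec_apply]

section Bordered

variable {m R : Type*} [Fintype m] [DecidableEq m] [CommRing R]

theorem det_bordered_add_vecMulVec (A : Matrix m m R) (b c x y : m → R) :
    (fromBlocks (A + vecMulVec x c + vecMulVec b y) (replicateCol (Fin 1) b)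
      (replicateRow (Fin 1) c) 0).det =
      (fromBlocks A (replicateCol (Fin 1) b) (replicateRow (Fin 1) c) 0).det := by
  have hfactor : fromBlocks (A + vecMulVec x c + vecMulVec b y) (replicateCol (Fin 1) b)
        (replicateRow (Fin 1) c) 0 =
      fromBlocks 1 (replicateCol (Fin 1) x) 0 1 *
        fromBlocks A (replicateCol (Fin 1) b) (replicateRow (Fin 1) c) 0 *
        fromBlocks 1 0 (replicateRow (Fin 1) y) 1 := by
    simp [fromBlocks_multiply, replicateCol_mul_replicateRow]
  rw [hfactor, det_mul, det_mul, det_fromBlocks_zero₂₁, det_fromBlocks_zero₁₂]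
  simp

theorem det_add_single_mul_det_bordered {L S : Matrix m m R} {a : m → R} (hL : L *ᵥ 1 = 0)
    (hLS : L * S = 1 - vecMulVec a 1) (ha : 1 ⬝ᵥ a = 1) (r : m) :
    (L + single r r 1).det *
      (fromBlocks S (replicateCol (Fin 1) 1) (replicateRow (Fin 1) (-1)) 0).det = 1 := by
  set e : m → R := Pi.single r 1 with he
  have hdet : (L + single r r 1).det =
      (fromBlocks L (replicateCol (Fin 1) (-e)) (replicateRow (Fin 1) e) 1).det := by
    rw [det_fromBlocks_one₂₂, replicateCol_mul_replicateRow, neg_vecMulVec, sub_neg_eq_add,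
      single_eq_single_vecMulVec_single]
  have hmul : fromBlocks L (replicateCol (Fin 1) (-e)) (replicateRow (Fin 1) e) 1 *
        fromBlocks S (replicateCol (Fin 1) 1) (replicateRow (Fin 1) (-1)) 0 =
      fromBlocks (1 + vecMulVec (e - a) 1) 0 (replicateRow (Fin 1) (e ᵥ* S - 1)) 1 := by
    rw [fromBlocks_multiply, replicateCol_mul_replicateRow, hLS, ← replicateCol_mulVec, hL,
      ← replicateRow_vecMul]
    congr 1
    · rw [vecMulVec_neg, neg_vecMulVec, neg_neg, sub_vecMulVec]
      abel
    · simp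
    · ext; simp [sub_eq_add_neg]
    · ext i j
      obtain rfl := Subsingleton.elim i j
      simp [he]
  rw [hdet, ← det_mul, hmul, det_fromBlocks_zero₁₂, det_one, mul_one, vecMulVec_eq Unit,
    det_one_add_replicateCol_mul_replicateRow, dotProduct_sub, ha]
  simp [he]

end Bordered

theorem posSemidef_of_mulVec_one_eq_zero {V : Type*} [Fintype V] {M : Matrix V V ℝ}
    (hM : M.IsSymm) (hone : M *ᵥ 1 = 0)
    (hnonneg : ∀ x : V → ℝ, ∑ v, x v = 0 → 0 ≤ x ⬝ᵥ M *ᵥ x) : M.PosSemidef := by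
  refine .of_dotProduct_mulVec_nonneg ?_ fun x => ?_
  · rwa [IsHermitian, conjTranspose_eq_transpose_of_trivial]
  · set y := Fintype.balance x
    have hx : x = y + Finset.expect univ x • 1 := by ext v; simp [y, Fintype.balance_apply]
    have hone' : 1 ᵥ* M = 0 := by rw [← mulVec_transpose, hM.eq, hone]
    have hquad : x ⬝ᵥ M *ᵥ x = y ⬝ᵥ M *ᵥ y := by
      rw [hx, mulVec_add, mulVec_smul, hone, smul_zero, add_zero, add_dotProduct, smul_dotProduct,
        dotProduct_mulVec 1, hone', zero_dotProduct, smul_zero, add_zero]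
    rw [star_trivial, hquad]
    exact hnonneg y (Fintype.sum_balance x)

section Variogram

variable {d : ℕ}

theorem thetaOf_eq_weightedLaplacian (Q : Matrix (Fin d) (Fin d) ℝ) :
    thetaOf Q = weightedLaplacian Q := by
  ext i j
  by_cases hij : i = j
  · subst hij
    simp [thetaOf, weightedLaplacian, mulVec, dotProduct, ← sum_erase_eq_sub, filter_ne']
  · simp [thetaOf, weightedLaplacian, hij]

theorem tau_eq_spanningTreeSum {Q : Matrix (Fin d) (Fin d) ℝ} {w : Sym2 (Fin d) → ℝ}
    (hw : ∀ i j, Q i j = w s(i, j)) : tau Q = spanningTreeSum w := by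
  classical
  simp only [tau, spanningTreeSum, prod_edgeFinset_eq_prod_filter_lt, hw]
  congr!

theorem Pmat_eq_one_sub_vecMulVec (d : ℕ) : Pmat d = 1 - vecMulVec (fun _ => (d : ℝ)⁻¹) 1 := by
  ext i j
  simp [Pmat]

theorem det_CM_eq_det_fromBlocks (Γ : Matrix (Fin d) (Fin d) ℝ) :
    (CM Γ).det = (fromBlocks (-(1 / 2 : ℝ) • Γ) (replicateCol (Fin 1) 1)
      (replicateRow (Fin 1) (-1)) 0).det := by
  rw [← det_submatrix_equiv_self (finSumFinEquiv (m := d) (n := 1))]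
  congr 1
  ext (i | i) (j | j) <;> simp [CM, div_eq_inv_mul]

theorem det_CM_gammaOf (S : Matrix (Fin d) (Fin d) ℝ) :
    (CM (gammaOf S)).det =
      (fromBlocks S (replicateCol (Fin 1) 1) (replicateRow (Fin 1) (-1)) 0).det := by
  have hΓ : -(1 / 2 : ℝ) • gammaOf S =
      S + vecMulVec (fun i => S i i / 2) (-1) + vecMulVec 1 (fun j => -S j j / 2) := by
    ext i j
    simp only [gammaOf, Matrix.smul_apply, of_apply, Matrix.add_apply, vecMulVec_apply, smul_eq_mul,
      Pi.neg_apply, Pi.one_apply]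
    ring
  rw [det_CM_eq_det_fromBlocks, hΓ, det_bordered_add_vecMulVec]

theorem det_thetaOf_add_single {Q : Matrix (Fin d) (Fin d) ℝ} (hQ : Q.IsSymm) (r : Fin d) :
    (thetaOf Q + single r r 1).det = tau Q := by
  let w : Sym2 (Fin d) → ℝ := Sym2.lift ⟨Q, fun i j => hQ.apply j i⟩
  rw [thetaOf_eq_weightedLaplacian, tau_eq_spanningTreeSum (Q := Q) (w := w) fun _ _ => rfl]
  exact det_weightedLaplacian_add_single w r

theorem thetaOf_mulVec_one (Q : Matrix (Fin d) (Fin d) ℝ) : thetaOf Q *ᵥ 1 = 0 := by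
  rw [thetaOf_eq_weightedLaplacian, weightedLaplacian_mulVec_one]

theorem isSymm_thetaOf {Q : Matrix (Fin d) (Fin d) ℝ} (hQ : Q.IsSymm) : (thetaOf Q).IsSymm := by
  rw [thetaOf_eq_weightedLaplacian]
  exact (isSymm_diagonal _).sub hQ

theorem det_CM_gammaOf_mul_tau (hd : 0 < d) {Q S : Matrix (Fin d) (Fin d) ℝ} (hQ : Q.IsSymm)
    (hS : thetaOf Q * S = Pmat d) : (CM (gammaOf S)).det * tau Q = 1 := by
  have hsum : 1 ⬝ᵥ (fun _ : Fin d => (d : ℝ)⁻¹) = 1 := by simp [dotProduct, hd.ne']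
  rw [mul_comm, det_CM_gammaOf, ← det_thetaOf_add_single hQ ⟨0, hd⟩]
  exact det_add_single_mul_det_bordered (thetaOf_mulVec_one Q)
    (hS.trans (Pmat_eq_one_sub_vecMulVec d)) hsum _

theorem tau_nonneg (hd : 0 < d) {Q : Matrix (Fin d) (Fin d) ℝ} (hQ : memQ Q) : 0 ≤ tau Q := by
  obtain ⟨hsymm, -, hpos⟩ := hQ
  have hθ : (thetaOf Q).PosSemidef := by
    refine posSemidef_of_mulVec_one_eq_zero (isSymm_thetaOf hsymm) (thetaOf_mulVec_one Q)
      fun x hx => ?_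
    by_cases hx0 : x = 0
    · simp [hx0]
    · exact (hpos x hx0 hx).le
  rw [← det_thetaOf_add_single hsymm ⟨0, hd⟩, single_eq_single_vecMulVec_single]
  exact (hθ.add (posSemidef_vecMulVec_self_star (Pi.single _ (1 : ℝ)))).det_nonneg

end Variogram

/-- For every `Q ∈ 𝒬`, `det(CM(Γ(Q))) · τ(Q) = 1`; in particular `det(CM(Γ(Q))) > 0`
and `(1/2) log det(CM(Γ(Q))) = −(1/2) log τ(Q)`. -/
theorem det_CM_variogram_mul_tau {d : ℕ} (hd : 0 < d)
    (Q S : Matrix (Fin d) (Fin d) ℝ)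
    (hQ : memQ Q) (hS : isSigmaOf Q S) :
    (CM (gammaOf S)).det * tau Q = 1 ∧
      0 < (CM (gammaOf S)).det ∧
      (1 / 2) * Real.log ((CM (gammaOf S)).det) = -(1 / 2) * Real.log (tau Q) := by
  have hmul : (CM (gammaOf S)).det * tau Q = 1 := det_CM_gammaOf_mul_tau hd hQ.1 hS.2.2
  have hdet : (CM (gammaOf S)).det = (tau Q)⁻¹ := eq_inv_of_mul_eq_one_left hmul
  have hpos : 0 < tau Q := (tau_nonneg hd hQ).lt_of_ne' (right_ne_zero_of_mul_eq_one hmul)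
  refine ⟨hmul, hdet ▸ inv_pos.mpr hpos, ?_⟩
  rw [hdet, Real.log_inv]
  ring
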